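/- For every complex number q with 0 < |q| < 1, one has ∑_{i,j,k,l ≥ 0} q^{i²+j²+k²+l²+il−jl−kl+l} / ((q²;q²)_i (q²;q²)_j (q²;q²)_k (q²;q²)_l) = J_2⁶ J_14 J_28⁵ / (J_1³ J_4³ J_{4,28} J_{5,28} J_{6,28} J_{7,28} J_{8,28} J_{9,28}) + 4q² · J_4³ J_{4,28} / J_2⁴. -/

import Mathlib

open scoped BigOperators

/-- The infinite q-Pochhammer symbol `(a; q)_∞ = ∏_{k=0}^∞ (1 - a q^k)`. -/
noncomputable def qPochInf (a q : ℂ) : ℂ := ∏' n : ℕ, (1 - a * q ^ n)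

/-- The finite q-Pochhammer symbol `(a; q)_n = ∏_{k=0}^{n-1} (1 - a q^k)`. -/
noncomputable def qPoch (a q : ℂ) (n : ℕ) : ℂ :=
  Finset.prod (Finset.range n) (fun k => 1 - a * q ^ k)

/-- `J_m = (q^m; q^m)_∞`. -/
noncomputable def J (q : ℂ) (m : ℕ) : ℂ := qPochInf (q ^ m) (q ^ m)

/-- `J_{a,m} = (q^a; q^m)_∞ (q^{m-a}; q^m)_∞ (q^m; q^m)_∞`. -/
noncomputable def Jam (q : ℂ) (a m : ℕ) : ℂ :=
  qPochInf (q ^ a) (q ^ m) * qPochInf (q ^ (m - a)) (q ^ m) * qPochInf (q ^ m) (q ^ m)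


/-! basics -/

lemma qp_zero (a q : ℂ) : qPoch a q 0 = 1 := by simp [qPoch]

lemma qp_succ (a q : ℂ) (n : ℕ) : qPoch a q (n+1) = qPoch a q n * (1 - a * q ^ n) := by
  simp [qPoch, Finset.prod_range_succ]

lemma one_sub_ne {x : ℂ} (h : ‖x‖ < 1) : 1 - x ≠ 0 := by
  intro h'
  have : x = 1 := by linear_combination -h'
  rw [this] at h
  simp at h

lemma summ_aux (a q : ℂ) (hq : ‖q‖ < 1) : Summable (fun n : ℕ => ‖-(a * q ^ n)‖) := by
  simp only [norm_neg, norm_mul, norm_pow]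
  exact (summable_geometric_of_lt_one (norm_nonneg _) hq).mul_left _

lemma qpi_mult (a q : ℂ) (hq : ‖q‖ < 1) : Multipliable (fun n : ℕ => 1 - a * q ^ n) := by
  have := multipliable_one_add_of_summable (summ_aux a q hq)
  simpa [sub_eq_add_neg] using this

lemma qpi_ne (a q : ℂ) (hq : ‖q‖ < 1) (ha : ‖a‖ < 1) : qPochInf a q ≠ 0 := by
  have := tprod_one_add_ne_zero_of_summable (f := fun n : ℕ => -(a * q ^ n)) (by
    intro n
    rw [← sub_eq_add_neg]
    apply one_sub_ne
    rw [norm_mul, norm_pow]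
    calc ‖a‖ * ‖q‖ ^ n ≤ ‖a‖ * 1 := by
          gcongr
          exact pow_le_one₀ (norm_nonneg _) hq.le
      _ < 1 := by simpa using ha) (summ_aux a q hq)
  simpa [qPochInf, sub_eq_add_neg] using this

lemma qp_tend (a q : ℂ) (hq : ‖q‖ < 1) :
    Filter.Tendsto (fun n => qPoch a q n) Filter.atTop (nhds (qPochInf a q)) :=
  (qpi_mult a q hq).hasProd.tendsto_prod_nat

lemma qpi_step (a q : ℂ) (hq : ‖q‖ < 1) : qPochInf a q = (1 - a) * qPochInf (a * q) q := by
  have h1 := (qp_tend a q hq).comp (Filter.tendsto_add_atTop_nat 1)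
  have h2 := (qp_tend (a*q) q hq).const_mul (1 - a)
  refine tendsto_nhds_unique h1 (h2.congr ?_)
  intro n
  simp only [Function.comp, qPoch]
  rw [Finset.prod_range_succ']
  simp only [pow_zero, mul_one]
  rw [mul_comm]
  congr 1
  apply Finset.prod_congr rfl
  intro k _
  ring

/-- `(q;q)_n` -/
noncomputable def PP (q : ℂ) (n : ℕ) : ℂ := qPoch q q n

lemma PP_zero (q : ℂ) : PP q 0 = 1 := qp_zero _ _
lemma PP_succ (q : ℂ) (n : ℕ) : PP q (n+1) = PP q n * (1 - q ^ (n+1)) := by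
  rw [PP, qp_succ, PP]; ring

lemma pow_ne (q : ℂ) (hq : ‖q‖ < 1) (n : ℕ) : 1 - q ^ (n+1) ≠ 0 := by
  apply one_sub_ne
  rw [norm_pow]
  exact pow_lt_one₀ (norm_nonneg _) hq (by simp)

lemma PP_ne (q : ℂ) (hq : ‖q‖ < 1) (n : ℕ) : PP q n ≠ 0 := by
  induction n with
  | zero => simp [PP_zero]
  | succ n ih => rw [PP_succ]; exact mul_ne_zero ih (pow_ne q hq n)

lemma PP_tend (q : ℂ) (hq : ‖q‖ < 1) :
    Filter.Tendsto (fun n => (PP q n)⁻¹) Filter.atTop (nhds (qPochInf q q)⁻¹) :=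
  (qp_tend q q hq).inv₀ (qpi_ne q q hq hq)

lemma PP_bd (q : ℂ) (hq : ‖q‖ < 1) : ∃ C : ℝ, 0 < C ∧ ∀ n, ‖(PP q n)⁻¹‖ ≤ C := by
  obtain ⟨C, hC, h⟩ := (Metric.isBounded_range_of_tendsto _ (PP_tend q hq)).exists_pos_norm_le
  exact ⟨C, hC, fun n => h _ ⟨n, rfl⟩⟩

/-! telescoping -/

lemma tele (F : ℕ → ℕ → ℂ) (G : ℕ → ℂ) (n : ℕ) (c d : ℂ) (h0 : G 0 = 0)
    (h : ∀ r ≤ n, c * F (n+1) r - d * F n r = G (r+1) - G r)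
    (hl : c * F (n+1) (n+1) = - G (n+1)) :
    c * ∑ r ∈ Finset.range (n+2), F (n+1) r = d * ∑ r ∈ Finset.range (n+1), F n r := by
  have h1 : ∑ r ∈ Finset.range (n+1), (c * F (n+1) r - d * F n r) = G (n+1) - G 0 := by
    rw [← Finset.sum_range_sub]
    apply Finset.sum_congr rfl
    intro r hr
    exact h r (by simpa [Nat.lt_succ_iff] using hr)
  rw [Finset.sum_sub_distrib, ← Finset.mul_sum, ← Finset.mul_sum, h0] at h1
  rw [Finset.sum_range_succ, mul_add, hl]
  linear_combination h1

noncomputable def thU (a b : ℂ) : ℕ → ℂ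
  | 0 => 1
  | r+1 => -(b * a ^ r) * thU a b r

lemma thU_bd (a b : ℂ) (ha : ‖a‖ ≤ 1) (r : ℕ) : ‖thU a b r‖ ≤ ‖b‖ ^ r := by
  induction r with
  | zero => simp [thU]
  | succ r ih =>
    rw [thU, norm_mul, norm_neg, norm_mul, norm_pow, pow_succ, mul_comm]
    have : ‖a‖ ^ r ≤ 1 := pow_le_one₀ (norm_nonneg _) ha
    have : ‖b‖ * ‖a‖^r ≤ ‖b‖ := by nlinarith [norm_nonneg b]
    gcongr

/-- Summand. -/
noncomputable def FF (q : ℂ) (s : ℕ → ℂ) (n r : ℕ) : ℂ := s r / (PP q (n - r) * PP q (n + r + 1))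

noncomputable def BB (q : ℂ) (s : ℕ → ℂ) (n : ℕ) : ℂ := ∑ r ∈ Finset.range (n+1), FF q s n r

noncomputable def GG (q : ℂ) (s : ℕ → ℂ) (rho : ℕ → ℂ) (n r : ℕ) : ℂ :=
  rho r * s r / (PP q (n + 1 - r) * PP q (n + r + 1))

lemma BB_rec (q : ℂ) (hq : ‖q‖ < 1) (s rho : ℕ → ℂ) (n : ℕ) (c d : ℂ) (h0 : rho 0 = 0)
    (h : ∀ r m, n = r + m → c * s r - d * s r * (1 - q^(m+1)) * (1 - q^(2*r+m+2)) =
      rho (r+1) * s (r+1) * (1 - q^(m+1)) - rho r * s r * (1 - q^(2*r+m+2)))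
    (hl : c * s (n+1) = - rho (n+1) * s (n+1) * (1 - q^(2*n+3))) :
    c * BB q s (n+1) = d * BB q s n := by
  unfold BB
  refine tele (FF q s) (GG q s rho n) n c d (by simp [GG, h0]) ?_ ?_
  · intro r hr
    obtain ⟨m, rfl⟩ := Nat.exists_eq_add_of_le hr
    have := h r m rfl
    simp only [FF, GG]
    rw [show r + m + 1 - r = m + 1 by omega, show r + m - r = m by omega,
      show r + m + 1 - (r+1) = m by omega, show r + m + 1 + r + 1 = (2*r+m+1)+1 by omega,
      show r + m + r + 1 = 2*r+m+1 by omega, show r + m + (r+1) + 1 = (2*r+m+1)+1 by omega,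
      PP_succ, PP_succ]
    have e1 := PP_ne q hq m
    have e2 := PP_ne q hq (2*r+m+1)
    have e3 := pow_ne q hq m
    have e4 := pow_ne q hq (2*r+m+1)
    rw [show 2*r+m+2 = 2*r+m+1+1 by omega] at this
    generalize hA : 1 - q^(m+1) = A at *
    generalize hB : 1 - q^(2*r+m+1+1) = B at *
    generalize PP q m = X at *
    generalize PP q (2*r+m+1) = Y at *
    field_simp
    linear_combination this
  · simp only [FF, GG]
    rw [show n + 1 + (n+1) + 1 = (2*n+2)+1 by omega, show n + (n+1) + 1 = 2*n+2 by omega, PP_succ]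
    have e1 := PP_ne q hq (n+1-(n+1))
    have e2 := PP_ne q hq (2*n+2)
    have e4 := pow_ne q hq (2*n+2)
    field_simp
    linear_combination hl

/-- first pair -/
lemma pair1 (p : ℂ) (hp : ‖p‖ < 1) (n : ℕ) :
    ((1 - p^(2*n+2)) * (1 + p^(2*n+1)) * (1 + p^(2*n+2))) *
      BB (p^2) (fun r => thU (p^3) p r * (1 - p^(4*r+2))) (n+1)
    = 1 * BB (p^2) (fun r => thU (p^3) p r * (1 - p^(4*r+2))) n := by
  have hp2 : ‖p^2‖ < 1 := by rw [norm_pow]; exact pow_lt_one₀ (norm_nonneg _) hp (by simp)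
  -- rho * s expressed via rho' with the factor 1 - p^(4r+2) divided out
  have key : ∀ r : ℕ, (1 - p^(4*r+2)) ≠ 0 := fun r => pow_ne p hp (4*r+1)
  refine BB_rec (p^2) hp2 _ (fun r => (-(p^(n+1-r))^2 - (p^n)^3*p^2*p^(n+1-r)
    + ((p^n)^2*p - (p^n)^4*p^4)*(p^r-1) + (p^n)^4*p^3*(p^r)^2 + (p^n)^2*p^2*(p^r)^3)
      / (1 - p^(4*r+2))) n _ _ ?_ ?_ ?_
  · simp; left; ring
  · rintro r m rfl
    have k1 := key r
    have k2 := key (r+1)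
    rw [show r + m + 1 - r = m + 1 by omega, show r + m + 1 - (r+1) = m by omega, thU]
    rw [div_mul_eq_mul_div, mul_comm (thU _ _ r) (1 - p^(4*r+2)), ← mul_assoc, ← mul_assoc]
    field_simp
    ring
  · have k1 := key (n+1)
    simp only [Nat.sub_self, pow_zero]
    field_simp
    ring

/-- JTP pair -/
lemma pair2 (a b : ℂ) (hq : ‖a*b‖ < 1) (ha : ‖a‖ < 1) (n : ℕ) :
    ((1 - (a*b)^(2*n+2)) * (1 - (a*b)^(2*n+3))) *
      BB (a*b) (fun r => thU (a*b) b r * (1 - a^(2*r+1))) (n+1)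
    = ((1 - a*(a*b)^(n+1)) * (1 - b*(a*b)^n)) * BB (a*b) (fun r => thU (a*b) b r * (1 - a^(2*r+1))) n := by
  have key : ∀ r : ℕ, (1 - a^(2*r+1)) ≠ 0 := fun r => pow_ne a ha (2*r)
  refine BB_rec (a*b) hq _ (fun r => (-(a*b)^(n+1-r) * ((1 - a*(a*b)^n*(a*b))*(1-(a*b)^r*(a^r)^2)
     + (1 - b*(a*b)^n)*a*((a*b)^r - (a^r)^2)))
      / (1 - a^(2*r+1))) n _ _ ?_ ?_ ?_
  · simp
  · rintro r m rfl
    have k1 := key r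
    have k2 := key (r+1)
    rw [show r + m + 1 - r = m + 1 by omega, show r + m + 1 - (r+1) = m by omega, thU]
    field_simp
    ring
  · have k1 := key (n+1)
    simp only [Nat.sub_self, pow_zero]
    field_simp
    ring

noncomputable def sg (q : ℂ) (s : ℕ) : ℂ := (if s % 2 = 0 then 1 else -1) * thU (q^6) (q^6) (s/2)
lemma sg_even (q : ℂ) (k : ℕ) : sg q (2*k) = thU (q^6) (q^6) k := by simp [sg]
lemma sg_odd (q : ℂ) (k : ℕ) : sg q (2*k+1) = -thU (q^6) (q^6) k := by
  rw [sg, show (2*k+1)/2 = k by omega, if_neg (by omega)]; ring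

lemma pair3 (q : ℂ) (hq : ‖q‖ < 1) (n : ℕ) :
    ((1 - q^(n+1)) * (1 - q^(2*n+3))) * BB q (sg q) (n+1) = q * BB q (sg q) n := by
  refine BB_rec q hq _ (fun r => if r % 2 = 0 then (q^(n+1-r))^2*(q^r-1) else
    -(q^n*q^2*q^r+(1-q)-q^n*q-(q^n)^2*q^3+q^(n+1-r)*q)) n _ _ ?_ ?_ ?_
  · simp
  · rintro r m rfl
    rw [show r + m + 1 - r = m + 1 by omega, show r + m + 1 - (r+1) = m by omega]
    obtain ⟨k, rfl | rfl⟩ := Nat.even_or_odd' r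
    · rw [sg_even, sg_odd, if_neg (by omega), if_pos (by omega)]
      ring
    · rw [sg_odd, show 2*k+1+1 = 2*(k+1) by ring, sg_even, if_pos (by omega), if_neg (by omega), thU]
      ring
  · simp only [Nat.sub_self, pow_zero]
    split_ifs
    · ring
    · ring

/-! analytic part -/
open Filter Topology

noncomputable def st (q : ℂ) (m n : ℕ) : ℂ := q^(n^2+m*n) / (PP q n * PP q (n+m))

lemma st_bd (q : ℂ) (hq : ‖q‖ < 1) : ∃ C : ℝ, 0 < C ∧ ∀ m n, ‖st q m n‖ ≤ C * ‖q‖^n := by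
  obtain ⟨C, hC, h⟩ := PP_bd q hq
  refine ⟨C*C, by positivity, fun m n => ?_⟩
  rw [st, div_eq_mul_inv, mul_inv, norm_mul, norm_mul, norm_pow, mul_comm]
  have : ‖q‖^(n^2+m*n) ≤ ‖q‖^n :=
    pow_le_pow_of_le_one (norm_nonneg _) hq.le (by nlinarith [Nat.le_self_pow two_ne_zero n])
  gcongr
  · exact h _
  · exact h _

lemma geo_sum (q : ℂ) (hq : ‖q‖ < 1) (C : ℝ) : Summable (fun n : ℕ => C * ‖q‖^n) :=
  (summable_geometric_of_lt_one (norm_nonneg _) hq).mul_left _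

lemma st_summable (q : ℂ) (hq : ‖q‖ < 1) (m : ℕ) : Summable (st q m) := by
  obtain ⟨C, hC, h⟩ := st_bd q hq
  exact Summable.of_norm_bounded (geo_sum q hq C) (h m)

lemma st_tend (q : ℂ) (hq : ‖q‖ < 1) :
    Tendsto (fun m => ∑' n, st q m n) atTop (𝓝 (qPochInf q q)⁻¹) := by
  obtain ⟨C, hC, h⟩ := st_bd q hq
  have := tendsto_tsum_of_dominated_convergence (𝓕 := atTop) (f := fun m n => st q m n)
    (g := fun n => if n = 0 then (qPochInf q q)⁻¹ else 0) (geo_sum q hq C) (fun n => ?_)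
    (Eventually.of_forall fun m n => h m n)
  · simpa using this
  · have hP : Tendsto (fun m => (PP q (n+m))⁻¹) atTop (𝓝 (qPochInf q q)⁻¹) := by
      have := (PP_tend q hq).comp (tendsto_add_atTop_nat n)
      simpa [Function.comp_def, add_comm] using this
    rcases n with _ | n
    · simp only [if_true]
      refine hP.congr fun m => ?_
      simp [st, PP_zero]
    · rw [if_neg (by omega)]
      have h1 : Tendsto (fun m : ℕ => (q^(n+1))^m) atTop (𝓝 0) :=
        tendsto_pow_atTop_nhds_zero_of_norm_lt_one (by
          rw [norm_pow]; exact pow_lt_one₀ (norm_nonneg _) hq (by omega))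
      have h2 := (h1.mul hP).const_mul (q^((n+1)^2) * (PP q (n+1))⁻¹)
      simp only [zero_mul, mul_zero] at h2
      refine h2.congr fun m => ?_
      rw [st, div_eq_mul_inv, mul_inv, pow_add q ((n+1)^2), mul_comm m, pow_mul q (n+1) m]
      ring

lemma st_rec (q : ℂ) (hq : ‖q‖ < 1) (m : ℕ) :
    ∑' n, st q m n - ∑' n, st q (m+1) n = q^(m+1) * (∑' n, st q (m+2) n - ∑' n, st q (m+1) n) := by
  have hs := st_summable q hq
  -- the auxiliary sequence
  have h0 : ∀ n, st q m n - st q (m+1) n + q^(m+1) * st q (m+1) n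
      = q^(n^2+m*n) * (1 - q^n) / (PP q n * PP q (n+m+1)) := by
    intro n
    have e1 := PP_ne q hq n
    have e2 := PP_ne q hq (n+m)
    have e3 := pow_ne q hq (n+m)
    simp only [st]
    rw [← add_assoc, PP_succ]
    field_simp
    ring
  have h1 : ∀ n, q^(m+1) * st q (m+2) n
      = q^((n+1)^2+m*(n+1)) * (1 - q^(n+1)) / (PP q (n+1) * PP q (n+1+m+1)) := by
    intro n
    have e1 := PP_ne q hq n
    have e2 := PP_ne q hq (n+m+2)
    have e3 := pow_ne q hq n
    simp only [st]
    rw [PP_succ, show n+1+m+1 = n+m+2 by omega, show n+(m+2) = n+m+2 by omega]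
    field_simp
    ring
  have hL : Summable (fun n => st q m n - st q (m+1) n + q^(m+1) * st q (m+1) n) :=
    ((hs m).sub (hs (m+1))).add ((hs (m+1)).mul_left _)
  have e : ∑' n, (st q m n - st q (m+1) n + q^(m+1) * st q (m+1) n) = ∑' n, q^(m+1) * st q (m+2) n := by
    rw [hL.tsum_eq_zero_add, h0 0]
    simp only [pow_zero, sub_self, mul_zero, zero_div, zero_add]
    exact tsum_congr fun n => by rw [h0, h1]
  rw [((hs m).sub (hs (m+1))).tsum_add ((hs (m+1)).mul_left _), (hs m).tsum_sub (hs (m+1)),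
    tsum_mul_left, tsum_mul_left] at e
  linear_combination e

lemma st_sum (q : ℂ) (hq : ‖q‖ < 1) (m : ℕ) : ∑' n, st q m n = (qPochInf q q)⁻¹ := by
  set S : ℕ → ℂ := fun m => ∑' n, st q m n with hS
  have hT : Tendsto S atTop (𝓝 (qPochInf q q)⁻¹) := st_tend q hq
  have hd : ∀ m, ‖S m - S (m+1)‖ ≤ ‖S (m+1) - S (m+2)‖ := by
    intro m
    have : S m - S (m+1) = q^(m+1) * (S (m+2) - S (m+1)) := st_rec q hq m
    rw [this, norm_mul, norm_pow, norm_sub_rev (S (m+2))]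
    exact mul_le_of_le_one_left (norm_nonneg _) (pow_le_one₀ (norm_nonneg _) hq.le)
  have hmono : Monotone (fun m => ‖S m - S (m+1)‖) := monotone_nat_of_le_succ hd
  have hz : Tendsto (fun m => ‖S m - S (m+1)‖) atTop (𝓝 0) := by
    have := (hT.sub (hT.comp (tendsto_add_atTop_nat 1))).norm
    simpa [Function.comp_def] using this
  have heq : ∀ m, S (m+1) = S m := by
    intro m
    have := hmono.ge_of_tendsto hz m
    have h3 : ‖S m - S (m+1)‖ = 0 := le_antisymm this (norm_nonneg _)
    rw [norm_eq_zero, sub_eq_zero] at h3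
    exact h3.symm
  have hc : ∀ m, S m = S 0 := by
    intro m
    induction m with
    | zero => rfl
    | succ m ih => rw [heq, ih]
  have h4 : S 0 = (qPochInf q q)⁻¹ := by
    refine tendsto_nhds_unique ?_ hT
    exact tendsto_const_nhds.congr fun m => (hc m).symm
  show S m = _
  rw [hc, h4]

lemma tsum_anti (g : ℕ → ℕ → ℂ) (hg : Summable (fun x : ℕ × ℕ => g x.1 x.2)) :
    ∑' r, ∑' m, g r m = ∑' n, ∑ r ∈ Finset.range (n+1), g r (n - r) := by
  have h1 : ∑' r, ∑' m, g r m = ∑' x : ℕ × ℕ, g x.1 x.2 := (hg.tsum_prod).symm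
  rw [h1, ← Finset.HasAntidiagonal.sigmaAntidiagonalEquivProd.tsum_eq]
  have h2 : Summable (fun x : Σ n : ℕ, Finset.HasAntidiagonal.antidiagonal n => g (x.2 : ℕ × ℕ).1 (x.2 : ℕ × ℕ).2) :=
    Finset.HasAntidiagonal.sigmaAntidiagonalEquivProd.summable_iff.mpr hg
  refine (h2.tsum_sigma' (fun n ↦ (hasSum_fintype _).summable)).trans ?_
  refine tsum_congr fun n => ?_
  rw [← Finset.Nat.sum_antidiagonal_eq_sum_range_succ g n, tsum_fintype]
  exact Finset.sum_finset_coe (fun x : ℕ × ℕ => g x.1 x.2) (Finset.HasAntidiagonal.antidiagonal n)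

lemma bailey (q : ℂ) (hq : ‖q‖ < 1) (s : ℕ → ℂ) (K : ℝ) (hs : ∀ r, ‖s r‖ ≤ K) :
    ∑' n, q^(n^2+n) * BB q s n = (∑' r, q^(r^2+r) * s r) * (qPochInf q q)⁻¹ := by
  obtain ⟨C, hC, h⟩ := st_bd q hq
  set g : ℕ → ℕ → ℂ := fun r m => q^(r^2+r) * s r * st q (2*r+1) m with hg
  have hsum : Summable (fun x : ℕ × ℕ => g x.1 x.2) := by
    have hb : Summable (fun x : ℕ × ℕ => (K * ‖q‖^x.1) * (C * ‖q‖^x.2)) :=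
      (geo_sum q hq K).mul_of_nonneg (geo_sum q hq C)
        (fun n => mul_nonneg ((norm_nonneg _).trans (hs 0)) (by positivity)) (fun n => by positivity)
    refine Summable.of_norm_bounded hb fun x => ?_
    simp only [hg]
    rw [norm_mul, norm_mul, norm_pow, mul_comm (‖q‖^_)]
    have : ‖q‖^(x.1^2+x.1) ≤ ‖q‖^x.1 := pow_le_pow_of_le_one (norm_nonneg _) hq.le (by omega)
    have hK : 0 ≤ K := (norm_nonneg _).trans (hs 0)
    gcongr
    · exact hs _
    · exact h _ _
  have h1 := tsum_anti g hsum
  have h2 : ∀ r, ∑' m, g r m = q^(r^2+r) * s r * (qPochInf q q)⁻¹ := by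
    intro r
    simp only [hg]
    rw [tsum_mul_left, st_sum q hq]
  simp only [h2] at h1
  rw [tsum_mul_right] at h1
  rw [h1]
  refine tsum_congr fun n => ?_
  rw [BB, Finset.mul_sum]
  refine Finset.sum_congr rfl fun r hr => ?_
  obtain ⟨m, rfl⟩ := Nat.exists_eq_add_of_le (Nat.lt_succ_iff.mp (Finset.mem_range.mp hr))
  simp only [hg, FF, st]
  rw [show r + m - r = m by omega, show m + (2*r+1) = r+m+r+1 by omega]
  ring

lemma BB2_closed (a b : ℂ) (hq : ‖a*b‖ < 1) (ha : ‖a‖ < 1) (n : ℕ) :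
    BB (a*b) (fun r => thU (a*b) b r * (1 - a^(2*r+1))) n
      = qPoch a (a*b) (n+1) * qPoch b (a*b) n * (PP (a*b) (2*n+1))⁻¹ := by
  induction n with
  | zero =>
    simp [BB, FF, thU, PP_zero, qp_zero, qp_succ, div_eq_mul_inv]
  | succ n ih =>
    have h := pair2 a b hq ha n
    have e1 := pow_ne _ hq (2*n+1)
    have e2 := pow_ne _ hq (2*n+2)
    have e3 := PP_ne _ hq (2*n+1)
    rw [ih] at h
    rw [show 2*(n+1)+1 = 2*n+1+1+1 by ring, PP_succ, PP_succ, qp_succ a _ (n+1), qp_succ b]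
    apply mul_left_cancel₀ (mul_ne_zero e1 e2)
    refine h.trans ?_
    field_simp

lemma jtp (a b : ℂ) (hq : ‖a*b‖ < 1) (ha : ‖a‖ < 1) (hb : ‖b‖ < 1) :
    ∑' r, thU (a*b) b r * (1 - a^(2*r+1))
      = qPochInf a (a*b) * qPochInf b (a*b) * qPochInf (a*b) (a*b) := by
  obtain ⟨C, hC, hP⟩ := PP_bd _ hq
  set Z := qPochInf (a*b) (a*b) with hZ
  have hZ0 : Z ≠ 0 := qpi_ne _ _ hq hq
  set s : ℕ → ℂ := fun r => thU (a*b) b r * (1 - a^(2*r+1)) with hs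
  have hsb : ∀ r, ‖s r‖ ≤ 2 * ‖b‖^r := by
    intro r
    simp only [hs]
    rw [norm_mul, mul_comm]
    have h1 : ‖1 - a^(2*r+1)‖ ≤ 2 := by
      refine (norm_sub_le _ _).trans ?_
      rw [norm_pow, norm_one]
      have := pow_le_one₀ (n := 2*r+1) (norm_nonneg a) ha.le
      linarith
    gcongr
    exact thU_bd _ _ hq.le r
  have hlim : Tendsto (fun n => BB (a*b) s n) atTop (𝓝 (∑' r, s r * (Z⁻¹ * Z⁻¹))) := by
    have h1 : ∀ n, BB (a*b) s n = ∑' r, (if r ∈ Finset.range (n+1) then FF (a*b) s n r else 0) := by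
      intro n
      rw [BB, tsum_eq_sum (s := Finset.range (n+1))]
      · exact Finset.sum_congr rfl fun r hr => by rw [if_pos hr]
      · intro r hr; rw [if_neg hr]
    simp only [h1]
    refine tendsto_tsum_of_dominated_convergence (bound := fun r => (2*C*C) * ‖b‖^r)
      (geo_sum b hb _) (fun r => ?_) (Eventually.of_forall fun n r => ?_)
    · have t1 : Tendsto (fun n => (PP (a*b) (n - r))⁻¹) atTop (𝓝 Z⁻¹) :=
        (PP_tend _ hq).comp (tendsto_sub_atTop_nat r)
      have t2 : Tendsto (fun n => (PP (a*b) (n + r + 1))⁻¹) atTop (𝓝 Z⁻¹) :=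
        (PP_tend _ hq).comp (tendsto_add_atTop_nat (r+1))
      refine ((t1.mul t2).const_mul (s r)).congr' ?_
      filter_upwards [eventually_ge_atTop r] with n hn
      rw [if_pos (Finset.mem_range.mpr (by omega)), FF, div_eq_mul_inv, mul_inv]
    · split_ifs
      · rw [FF, div_eq_mul_inv, mul_inv, norm_mul (s r), norm_mul (PP (a*b) (n-r))⁻¹]
        calc ‖s r‖ * (‖(PP (a*b) (n-r))⁻¹‖ * ‖(PP (a*b) (n+r+1))⁻¹‖)
            ≤ (2 * ‖b‖^r) * (C * C) := by
              gcongr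
              · exact hsb r
              · exact hP _
              · exact hP _
          _ = _ := by ring
      · rw [norm_zero]; positivity
  have hlim2 : Tendsto (fun n => BB (a*b) s n) atTop
      (𝓝 (qPochInf a (a*b) * qPochInf b (a*b) * Z⁻¹)) := by
    have t1 := (qp_tend a _ hq).comp (tendsto_add_atTop_nat 1)
    have t2 := qp_tend b _ hq
    have t3 : Tendsto (fun n => (PP (a*b) (2*n+1))⁻¹) atTop (𝓝 Z⁻¹) :=
      (PP_tend _ hq).comp (tendsto_atTop_mono (fun n => by simp only [id]; omega) tendsto_id)
    exact ((t1.mul t2).mul t3).congr fun n => (BB2_closed a b hq ha n).symm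
  have := tendsto_nhds_unique hlim hlim2
  rw [tsum_mul_right] at this
  field_simp at this
  rw [this]
  ring

/-! Euler -/

noncomputable def eu (q : ℂ) : ℕ → ℂ
  | 0 => 1
  | j+1 => eu q j * q^j / (1 - q^(j+1))

lemma eu_summable (q z : ℂ) (hq : ‖q‖ < 1) : Summable (fun j => ‖eu q j * z^j‖) := by
  have hz : ∀ᶠ j in atTop, ‖eu q (j+1) * z^(j+1)‖ ≤ (1/2) * ‖eu q j * z^j‖ := by
    have t : Tendsto (fun j : ℕ => q^j * z / (1 - q^(j+1))) atTop (𝓝 (0 * z / (1 - 0))) := by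
      have t1 : Tendsto (fun j : ℕ => q^j) atTop (𝓝 0) := tendsto_pow_atTop_nhds_zero_of_norm_lt_one hq
      have t2 := t1.comp (tendsto_add_atTop_nat 1)
      exact (t1.mul_const z).div (t2.const_sub 1) (by simp)
    have t' := t.norm
    simp only [zero_mul, zero_div, norm_zero] at t'
    filter_upwards [t'.eventually (gt_mem_nhds (show (0:ℝ) < 1/2 by norm_num))] with j hj
    have : eu q (j+1) * z^(j+1) = (q^j * z / (1 - q^(j+1))) * (eu q j * z^j) := by
      rw [eu]; ring
    rw [this, norm_mul]
    gcongr
  refine summable_of_ratio_norm_eventually_le (r := 1/2) (by norm_num) ?_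
  simpa using hz

lemma euler_step (q z : ℂ) (hq : ‖q‖ < 1) :
    ∑' j, eu q j * z^j = (1 + z) * ∑' j, eu q j * (z*q)^j := by
  have s1 := (eu_summable q z hq).of_norm
  have s2 := (eu_summable q (z*q) hq).of_norm
  have : ∑' j, (eu q j * z^j - eu q j * (z*q)^j) = z * ∑' j, eu q j * (z*q)^j := by
    rw [(s1.sub s2).tsum_eq_zero_add, ← tsum_mul_left]
    simp only [pow_zero, sub_self, zero_add]
    refine tsum_congr fun j => ?_
    have e := pow_ne q hq j
    rw [eu]
    field_simp
    ring
  rw [s1.tsum_sub s2] at this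
  linear_combination this

lemma euler_iter (q z : ℂ) (hq : ‖q‖ < 1) (n : ℕ) :
    ∑' j, eu q j * z^j = qPoch (-z) q n * ∑' j, eu q j * (z*q^n)^j := by
  induction n with
  | zero => simp [qp_zero]
  | succ n ih =>
    rw [ih, euler_step q (z*q^n) hq, qp_succ, show z*q^n*q = z*q^(n+1) by ring]
    ring

lemma euler (q z : ℂ) (hq : ‖q‖ < 1) : ∑' j, eu q j * z^j = qPochInf (-z) q := by
  have t : Tendsto (fun n => ∑' j, eu q j * (z*q^n)^j) atTop (𝓝 (∑' j, if j = 0 then (1:ℂ) else 0)) := by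
    refine tendsto_tsum_of_dominated_convergence (eu_summable q z hq) (fun j => ?_)
      (Eventually.of_forall fun n j => ?_)
    · rcases j with _ | j
      · simp [eu]
      · rw [if_neg (by omega)]
        have t1 : Tendsto (fun j : ℕ => q^j) atTop (𝓝 0) := tendsto_pow_atTop_nhds_zero_of_norm_lt_one hq
        have := ((t1.const_mul z).pow (j+1)).const_mul (eu q (j+1))
        simpa using this
    · rw [norm_mul, norm_mul, norm_pow, norm_pow, norm_mul, norm_pow]
      have : ‖q‖^n ≤ 1 := pow_le_one₀ (norm_nonneg _) hq.le
      gcongr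
      exact mul_le_of_le_one_right (norm_nonneg _) this
  simp only [tsum_ite_eq] at t
  have t2 := (qp_tend (-z) q hq).mul t
  rw [mul_one] at t2
  refine tendsto_nhds_unique ?_ t2
  exact tendsto_const_nhds.congr fun n => euler_iter q z hq n

lemma eu_eq (q : ℂ) (hq : ‖q‖ < 1) (j : ℕ) : eu (q^2) j * q^j = q^(j^2) / PP (q^2) j := by
  have hq2 : ‖q^2‖ < 1 := by rw [norm_pow]; exact pow_lt_one₀ (norm_nonneg _) hq (by simp)
  induction j with
  | zero => simp [eu, PP_zero]
  | succ j ih =>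
    have e := pow_ne _ hq2 j
    have e2 := PP_ne _ hq2 j
    have : eu (q^2) (j+1) * q^(j+1) = (eu (q^2) j * q^j) * ((q^2)^j * q / (1 - (q^2)^(j+1))) := by
      rw [eu]; ring
    rw [this, ih, PP_succ]
    field_simp
    ring

lemma euler_z (q : ℂ) (hq : ‖q‖ < 1) (w : ℂ) :
    (∑' j, q^(j^2) / PP (q^2) j * w^j = qPochInf (-(q*w)) (q^2)) ∧
    Summable (fun j => ‖q^(j^2) / PP (q^2) j * w^j‖) := by
  have hq2 : ‖q^2‖ < 1 := by rw [norm_pow]; exact pow_lt_one₀ (norm_nonneg _) hq (by simp)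
  have h : ∀ j, q^(j^2) / PP (q^2) j * w^j = eu (q^2) j * (q*w)^j := by
    intro j
    rw [← eu_eq q hq]; ring
  simp only [h]
  exact ⟨euler _ _ hq2, eu_summable _ _ hq2⟩

/-! products -/

lemma npow_lt (q : ℂ) (hq : ‖q‖ < 1) (n : ℕ) (hn : n ≠ 0) : ‖q^n‖ < 1 := by
  rw [norm_pow]; exact pow_lt_one₀ (norm_nonneg _) hq hn

lemma qpi_sq (a q : ℂ) (hq : ‖q‖ < 1) : qPochInf a q * qPochInf (-a) q = qPochInf (a^2) (q^2) := by
  refine tendsto_nhds_unique ((qp_tend a q hq).mul (qp_tend (-a) q hq)) ?_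
  refine (qp_tend (a^2) (q^2) (npow_lt q hq 2 (by simp))).congr fun n => ?_
  simp only [qPoch]
  rw [← Finset.prod_mul_distrib]
  exact Finset.prod_congr rfl fun k _ => by ring

lemma qp_split (a q : ℂ) (m n : ℕ) :
    qPoch a q (m*n) = ∏ i ∈ Finset.range m, qPoch (a*q^i) (q^m) n := by
  induction n with
  | zero => simp [qp_zero]
  | succ n ih =>
    have : qPoch a q (m*(n+1)) = qPoch a q (m*n) * ∏ i ∈ Finset.range m, (1 - a*q^(m*n+i)) := by
      rw [mul_add, mul_one, qPoch, Finset.prod_range_add, qPoch]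
    rw [this, ih, ← Finset.prod_mul_distrib]
    refine Finset.prod_congr rfl fun i _ => ?_
    rw [qp_succ]
    ring

lemma qpi_split (a q : ℂ) (hq : ‖q‖ < 1) (m : ℕ) (hm : m ≠ 0) :
    qPochInf a q = ∏ i ∈ Finset.range m, qPochInf (a*q^i) (q^m) := by
  have t1 : Tendsto (fun n => qPoch a q (m*n)) atTop (𝓝 (qPochInf a q)) :=
    (qp_tend a q hq).comp (tendsto_id.const_mul_atTop' (Nat.pos_of_ne_zero hm))
  refine tendsto_nhds_unique t1 ?_
  simp only [qp_split]
  exact tendsto_finsetProd _ fun i _ => qp_tend _ _ (npow_lt q hq m hm)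

lemma qpi_split2 (a q : ℂ) (hq : ‖q‖ < 1) :
    qPochInf a q = qPochInf a (q^2) * qPochInf (a*q) (q^2) := by
  rw [qpi_split a q hq 2 (by simp), Finset.prod_range_succ, Finset.prod_range_one]
  simp

lemma prodA (q : ℂ) (hq : ‖q‖ < 1) :
    qPochInf (-q) (q^2) = J q 2 ^ 2 / (J q 1 * J q 4) := by
  have hq2 := npow_lt q hq 2 (by simp)
  have h1 := qpi_ne (q^1) (q^1) (npow_lt q hq 1 (by simp)) (npow_lt q hq 1 (by simp))
  have h4 := qpi_ne (q^4) (q^4) (npow_lt q hq 4 (by simp)) (npow_lt q hq 4 (by simp))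
  have e1 := qpi_split2 q q hq
  have e2 := qpi_split2 (q^2) (q^2) hq2
  have e3 := qpi_sq q (q^2) hq2
  rw [show q * q = q^2 by ring] at e1
  rw [show q^2 * q^2 = q^4 by ring, show (q^2)^2 = q^4 by ring] at e2
  rw [show (q^2)^2 = q^4 by ring] at e3
  simp only [J]
  rw [eq_div_iff (mul_ne_zero h1 h4), pow_one, e1]
  linear_combination (qPochInf (q^2) (q^2) * qPochInf (q^4) (q^4)) * e3 - qPochInf (q^2) (q^2) * e2

lemma prodB (q : ℂ) (hq : ‖q‖ < 1) :
    qPochInf (-q^2) (q^2) = J q 4 / J q 2 := by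
  have hq2 := npow_lt q hq 2 (by simp)
  have h2 := qpi_ne (q^2) (q^2) hq2 hq2
  have e3 := qpi_sq (q^2) (q^2) hq2
  rw [show (q^2)^2 = q^4 by ring] at e3
  simp only [J]
  rw [eq_div_iff h2]
  linear_combination e3

lemma prodC (q : ℂ) (hq : ‖q‖ < 1) :
    qPochInf ((-q)^2) ((-q)^2*(-q)^5) * qPochInf ((-q)^5) ((-q)^2*(-q)^5)
      * qPochInf ((-q)^2*(-q)^5) ((-q)^2*(-q)^5) * (qPochInf (q^2) (q^2))⁻¹
    = J q 14 * J q 28 ^ 5 / (Jam q 4 28 * Jam q 5 28 * Jam q 6 28 *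
          Jam q 7 28 * Jam q 8 28 * Jam q 9 28) := by
  have hq2 := npow_lt q hq 2 (by simp)
  have hq14 := npow_lt q hq 14 (by simp)
  have hq28 := npow_lt q hq 28 (by simp)
  have nz : ∀ k, k ≠ 0 → qPochInf (q^k) (q^28) ≠ 0 := fun k hk => qpi_ne _ _ hq28 (npow_lt q hq k hk)
  have nz2 := qpi_ne (q^2) (q^2) hq2 hq2
  have hp7 : ‖(-q)^2*(-q)^5‖ < 1 := by
    rw [show (-q)^2*(-q)^5 = -q^7 by ring, norm_neg]; exact npow_lt q hq 7 (by simp)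
  rw [qpi_split2 ((-q)^2) _ hp7, qpi_split2 ((-q)^5) _ hp7, qpi_split2 ((-q)^2*(-q)^5) _ hp7]
  rw [show ((-q)^2*(-q)^5)^2 = q^14 by ring, show (-q)^2*((-q)^2*(-q)^5) = -q^9 by ring,
    show (-q)^5*((-q)^2*(-q)^5) = q^12 by ring,
    show (-q)^2*(-q)^5*((-q)^2*(-q)^5) = q^14 by ring, show (-q)^2*(-q)^5 = -q^7 by ring,
    show (-q)^5 = -q^5 by ring, show (-q)^2 = q^2 by ring]
  have sp : ∀ k, qPochInf (q^k) (q^14) = qPochInf (q^k) (q^28) * qPochInf (q^(k+14)) (q^28) := by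
    intro k
    rw [qpi_split2 (q^k) (q^14) hq14, ← pow_add, ← pow_mul]
  have sq : ∀ k, qPochInf (q^k) (q^14) * qPochInf (-q^k) (q^14) = qPochInf (q^(k*2)) (q^28) := by
    intro k
    rw [qpi_sq _ _ hq14, ← pow_mul, ← pow_mul]
  have s5 := sq 5
  have s7 := sq 7
  have s9 := sq 9
  have J2 := qpi_split (q^2) (q^2) hq2 7 (by simp)
  simp only [Finset.prod_range_succ, Finset.prod_range_zero, one_mul, ← pow_mul, ← pow_add] at J2
  norm_num only at J2 s5 s7 s9
  rw [sp 5] at s5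
  rw [sp 7] at s7
  rw [sp 9] at s9
  rw [sp 4, sp 6, sp 8, sp 10] at J2
  have s14 := sp 14
  norm_num only at s5 s7 s9 s14 J2
  simp only [J, Jam]
  norm_num only
  rw [eq_div_iff, ← div_eq_mul_inv, div_mul_eq_mul_div, div_eq_iff nz2, J2]
  · generalize qPochInf (q^4) (q^28) = C4 at *
    generalize qPochInf (q^5) (q^28) = C5 at *
    generalize qPochInf (q^6) (q^28) = C6 at *
    generalize qPochInf (q^7) (q^28) = C7 at *
    generalize qPochInf (q^8) (q^28) = C8 at *
    generalize qPochInf (q^9) (q^28) = C9 at *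
    generalize qPochInf (q^10) (q^28) = C10 at *
    generalize qPochInf (q^14) (q^28) = C14 at *
    generalize qPochInf (q^18) (q^28) = C18 at *
    generalize qPochInf (q^19) (q^28) = C19 at *
    generalize qPochInf (q^20) (q^28) = C20 at *
    generalize qPochInf (q^21) (q^28) = C21 at *
    generalize qPochInf (q^22) (q^28) = C22 at *
    generalize qPochInf (q^23) (q^28) = C23 at *
    generalize qPochInf (q^24) (q^28) = C24 at *
    generalize qPochInf (q^28) (q^28) = C28 at *
    generalize qPochInf (q^2) (q^14) = A2 at *
    generalize qPochInf (q^12) (q^14) = A12 at *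
    generalize qPochInf (q^14) (q^14) = A14 at *
    generalize qPochInf (-q^5) (q^14) = B5 at *
    generalize qPochInf (-q^7) (q^14) = B7 at *
    generalize qPochInf (-q^9) (q^14) = B9 at *
    clear J2 sp sq nz nz2
    calc _ = A2 * A12 * A14 * (C5*C19*B5) * (C7*C21*B7) * (C9*C23*B9) * C4*C24*C6*C22*C8*C20*C28^6 := by ring
      _ = A2 * A12 * A14 * C10 * (C14 * C28) * C18 * C4*C24*C6*C22*C8*C20*C28^5 := by
          rw [s5, s7, s9]; ring
      _ = _ := by rw [← s14]; ring
  · refine_lift mul_ne_zero (mul_ne_zero (mul_ne_zero (mul_ne_zero (mul_ne_zero ?_ ?_) ?_) ?_) ?_) ?_ <;>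
      exact mul_ne_zero (mul_ne_zero (nz _ (by simp)) (nz _ (by simp))) (nz _ (by simp))

/-! the two single sums -/

lemma BB1_closed (q : ℂ) (hq : ‖q‖ < 1) (n : ℕ) :
    BB (q^2) (fun r => thU ((-q)^3) (-q) r * (1 - (-q)^(4*r+2))) n
      = qPoch (-q) (q^2) n / PP (q^2) (2*n) := by
  have hq2 := npow_lt q hq 2 (by simp)
  induction n with
  | zero =>
    have := one_sub_ne hq2
    simp [BB, FF, thU, PP_zero, qp_zero, PP_succ]
    exact this
  | succ n ih =>
    have hp : ‖-q‖ < 1 := by simpa using hq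
    have h := pair1 (-q) hp n
    rw [show (-q)^2 = q^2 by ring, ih, one_mul] at h
    have e1 := pow_ne _ hq2 (2*n)
    have e2 := pow_ne _ hq2 (2*n+1)
    have e3 := PP_ne _ hq2 (2*n)
    have c : (1 - (-q)^(2*n+2)) * (1 + (-q)^(2*n+1)) * (1 + (-q)^(2*n+2)) =
       (1 - (q^2)^(2*n+1+1)) * (1 - q^(2*n+1)) := by
      rw [Odd.neg_pow (n := 2*n+1) ⟨n, rfl⟩, Even.neg_pow (n := 2*n+2) ⟨n+1, by ring⟩]
      ring
    have e4 := pow_ne q hq (2*n)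
    rw [c] at h
    apply mul_left_cancel₀ (mul_ne_zero e2 e4)
    rw [h, show 2*(n+1) = 2*n+1+1 by ring, PP_succ _ (2*n+1), PP_succ _ (2*n), qp_succ]
    field_simp
    ring

lemma sumE (q : ℂ) (hq : ‖q‖ < 1) :
    ∑' m, (q^2)^(m^2+m) * (qPoch (-q) (q^2) m / PP (q^2) (2*m))
    = J q 14 * J q 28 ^ 5 / (Jam q 4 28 * Jam q 5 28 * Jam q 6 28 *
          Jam q 7 28 * Jam q 8 28 * Jam q 9 28) := by
  have hq2 := npow_lt q hq 2 (by simp)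
  have hp : ‖-q‖ < 1 := by simpa using hq
  simp only [← BB1_closed q hq]
  rw [bailey (q^2) hq2 _ 2]
  · rw [← prodC q hq, ← jtp]
    · congr 1
      refine tsum_congr fun r => ?_
      have : (q^2)^(r^2+r) * thU ((-q)^3) (-q) r = thU ((-q)^2*(-q)^5) ((-q)^5) r := by
        induction r with
        | zero => simp [thU]
        | succ r ih => rw [thU, thU, ← ih]; ring
      rw [← mul_assoc, this, ← pow_mul, show 2*(2*r+1) = 4*r+2 by ring]
    · rw [← pow_add]; exact npow_lt _ hp _ (by simp)
    · exact npow_lt _ hp _ (by simp)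
    · exact npow_lt _ hp _ (by simp)
  · intro r
    rw [norm_mul]
    have h1 : ‖1 - (-q)^(4*r+2)‖ ≤ 2 := by
      refine (norm_sub_le _ _).trans ?_
      have := (npow_lt (-q) hp (4*r+2) (by simp)).le
      rw [norm_one]
      linarith
    have h2 := thU_bd ((-q)^3) (-q) (npow_lt _ hp _ (by simp)).le r
    have h3 : ‖-q‖^r ≤ 1 := pow_le_one₀ (norm_nonneg _) hp.le
    nlinarith [norm_nonneg (thU ((-q)^3) (-q) r), norm_nonneg (1 - (-q)^(4*r+2))]

lemma BB3_closed (q : ℂ) (hq : ‖q‖ < 1) (n : ℕ) :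
    BB q (sg q) n = q^n * (qPoch (-q) q n / PP q (2*n+1)) := by
  induction n with
  | zero =>
    simp [BB, FF, sg, thU, PP_zero, qp_zero, PP_succ]
  | succ n ih =>
    have h := pair3 q hq n
    rw [ih] at h
    have e1 := pow_ne _ hq n
    have e2 := pow_ne _ hq (2*n+2)
    have e3 := PP_ne _ hq (2*n+1)
    have e4 := pow_ne _ hq (2*n+1)
    apply mul_left_cancel₀ (mul_ne_zero e1 e2)
    rw [h, show 2*(n+1)+1 = 2*n+1+1+1 by ring, PP_succ _ (2*n+1+1), PP_succ _ (2*n+1), qp_succ]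
    field_simp
    ring

lemma even_odd (f : ℕ → ℂ) (hf : Summable f) :
    Summable (fun k => f (2*k)) ∧ Summable (fun k => f (2*k+1)) ∧
    ∑' n, f n = ∑' k, f (2*k) + ∑' k, f (2*k+1) := by
  have s1 : Summable (fun k => f (2*k)) :=
    hf.comp_injective (i := fun k => 2*k) (fun a b h => by simpa using h)
  have s2 : Summable (fun k => f (2*k+1)) :=
    hf.comp_injective (i := fun k => 2*k+1) (fun a b h => by simpa using h)
  exact ⟨s1, s2, (tsum_even_add_odd s1 s2).symm⟩

lemma sumO (q : ℂ) (hq : ‖q‖ < 1) :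
    ∑' m, q^(m^2+2*m) * (qPoch (-q) q m / PP q (2*m+1))
    = qPochInf (q^2) (q^14) * qPochInf (q^12) (q^14) * qPochInf (q^14) (q^14) * (qPochInf q q)⁻¹ := by
  have h : ∀ m, q^(m^2+2*m) * (qPoch (-q) q m / PP q (2*m+1)) = q^(m^2+m) * BB q (sg q) m := by
    intro m
    rw [BB3_closed q hq]; ring
  simp only [h]
  have hb : ∀ r, ‖sg q r‖ ≤ 1 := by
    intro r
    have h6 := (npow_lt q hq 6 (by simp)).le
    have : ∀ k, ‖thU (q^6) (q^6) k‖ ≤ 1 := fun k =>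
      (thU_bd _ _ h6 k).trans (pow_le_one₀ (norm_nonneg _) h6)
    obtain ⟨k, rfl | rfl⟩ := Nat.even_or_odd' r
    · rw [sg_even]; exact this k
    · rw [sg_odd, norm_neg]; exact this k
  rw [bailey q hq _ 1 hb]
  congr 1
  have hj := jtp (q^2) (q^12) (by rw [← pow_add]; exact npow_lt _ hq _ (by simp))
    (npow_lt _ hq _ (by simp)) (npow_lt _ hq _ (by simp))
  rw [← pow_add] at hj
  norm_num only at hj
  rw [← hj]
  have hs : Summable (fun s => q^(s^2+s) * sg q s) := by
    refine Summable.of_norm_bounded (geo_sum q hq 1) fun s => ?_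
    rw [norm_mul, norm_pow, mul_comm]
    gcongr ?_ * ?_
    · exact hb s
    · exact pow_le_pow_of_le_one (norm_nonneg _) hq.le (by omega)
  obtain ⟨s1, s2, s3⟩ := even_odd _ hs
  rw [s3, ← s1.tsum_add s2]
  refine tsum_congr fun r => ?_
  have : q^((2*r)^2+2*r) * thU (q^6) (q^6) r = thU (q^14) (q^12) r := by
    induction r with
    | zero => simp [thU]
    | succ r ih => rw [thU, thU, ← ih]; ring
  rw [sg_even, sg_odd, ← this]
  ring

/-! the quadruple sum -/

noncomputable def TT (q : ℂ) (l i j k : ℕ) : ℂ :=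
  (q^(l^2+l) / PP (q^2) l) * ((q^(i^2) / PP (q^2) i * (q^l)^i) *
    ((q^(j^2) / PP (q^2) j * ((q^l)⁻¹)^j) * (q^(k^2) / PP (q^2) k * ((q^l)⁻¹)^k)))

lemma TT_eq (q : ℂ) (h0 : q ≠ 0) (i j k l : ℕ) :
    q ^ (((i:ℤ)^2 + (j:ℤ)^2 + (k:ℤ)^2 + (l:ℤ)^2 + (i:ℤ)*(l:ℤ) - (j:ℤ)*(l:ℤ) - (k:ℤ)*(l:ℤ) + (l:ℤ)) : ℤ) /
          (qPoch (q ^ 2) (q ^ 2) i * qPoch (q ^ 2) (q ^ 2) j * qPoch (q ^ 2) (q ^ 2) k * qPoch (q ^ 2) (q ^ 2) l)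
    = TT q l i j k := by
  have h : q ^ (((i:ℤ)^2 + (j:ℤ)^2 + (k:ℤ)^2 + (l:ℤ)^2 + (i:ℤ)*(l:ℤ) - (j:ℤ)*(l:ℤ) - (k:ℤ)*(l:ℤ) + (l:ℤ)) : ℤ)
      = q^(l^2+l) * (q^(i^2) * (q^l)^i) * (q^(j^2) * ((q^l)⁻¹)^j) * (q^(k^2) * ((q^l)⁻¹)^k) := by
    have e : (((i:ℤ)^2 + (j:ℤ)^2 + (k:ℤ)^2 + (l:ℤ)^2 + (i:ℤ)*(l:ℤ) - (j:ℤ)*(l:ℤ) - (k:ℤ)*(l:ℤ) + (l:ℤ)) : ℤ)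
      = ((l^2+l+i^2+l*i+j^2+k^2 : ℕ) : ℤ) - ((l*j+l*k : ℕ) : ℤ) := by push_cast; ring
    rw [e, zpow_sub₀ h0, zpow_natCast, zpow_natCast, inv_pow, inv_pow, ← pow_mul, ← pow_mul, ← pow_mul]
    have : q^(l*j) ≠ 0 := pow_ne_zero _ h0
    have : q^(l*k) ≠ 0 := pow_ne_zero _ h0
    simp only [pow_add]
    field_simp
  rw [h]
  simp only [TT, PP, div_eq_mul_inv, mul_inv]
  ring

lemma quad_ineq (i j k l : ℤ) (hi : 0 ≤ i) (hj : 0 ≤ j) (hk : 0 ≤ k) (hl : 0 ≤ l) :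
    i + j + k + l ≤ 4 * (i^2 + j^2 + k^2 + l^2 + i*l - j*l - k*l + l) := by
  have a : i ≤ i^2 := by nlinarith [Int.le_self_sq i]
  have b : j ≤ j^2 := Int.le_self_sq j
  have c : k ≤ k^2 := Int.le_self_sq k
  nlinarith [sq_nonneg (3*j - 2*l), sq_nonneg (3*k-2*l), mul_nonneg hi hl, sq_nonneg l, sq_nonneg i]

lemma TT_summable (q : ℂ) (h0 : q ≠ 0) (hq : ‖q‖ < 1) :
    Summable (fun x : ℕ × ℕ × ℕ × ℕ => TT q x.1 x.2.1 x.2.2.1 x.2.2.2) := by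
  obtain ⟨C, hC, hP⟩ := PP_bd (q^2) (npow_lt q hq 2 (by simp))
  have hn : 0 < ‖q‖ := norm_pos_iff.mpr h0
  set t : ℝ := ‖q‖ ^ ((1:ℝ)/4) with ht
  have ht0 : 0 < t := Real.rpow_pos_of_pos hn _
  have ht1 : t < 1 := Real.rpow_lt_one hn.le hq (by norm_num)
  have ht4 : ‖q‖ = t^(4:ℕ) := by
    rw [ht, ← Real.rpow_natCast, ← Real.rpow_mul hn.le]; norm_num
  have hg : Summable (fun n : ℕ => C * t^n) := (summable_geometric_of_lt_one ht0.le ht1).mul_left _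
  have hnn : ∀ n : ℕ, 0 ≤ C * t^n := fun n => by positivity
  have g2 := hg.mul_of_nonneg hg hnn hnn
  have g3 := hg.mul_of_nonneg g2 hnn (fun x => mul_nonneg (hnn _) (hnn _))
  have g4 := hg.mul_of_nonneg g3 hnn (fun x => mul_nonneg (hnn _) (mul_nonneg (hnn _) (hnn _)))
  refine Summable.of_norm_bounded g4 ?_
  rintro ⟨l, i, j, k⟩
  simp only
  rw [← TT_eq q h0]
  change ‖q ^ _ / (PP (q^2) i * PP (q^2) j * PP (q^2) k * PP (q^2) l)‖ ≤ _
  rw [div_eq_mul_inv, norm_mul, norm_zpow, mul_inv, mul_inv, mul_inv, norm_mul, norm_mul, norm_mul]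
  have hz : ‖q‖ ^ (((i:ℤ)^2 + (j:ℤ)^2 + (k:ℤ)^2 + (l:ℤ)^2 + (i:ℤ)*(l:ℤ) - (j:ℤ)*(l:ℤ) - (k:ℤ)*(l:ℤ) + (l:ℤ)) : ℤ)
      ≤ t^(i+j+k+l) := by
    rw [ht4, ← zpow_natCast t 4, ← zpow_mul, ← zpow_natCast t (i+j+k+l)]
    apply zpow_le_zpow_right_of_le_one₀ ht0 ht1.le
    push_cast
    exact quad_ineq i j k l (by positivity) (by positivity) (by positivity) (by positivity)
  calc _ ≤ t^(i+j+k+l) * (C * C * C * C) := by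
        gcongr
        · exact hP _
        · exact hP _
        · exact hP _
        · exact hP _
    _ = _ := by ring

/-- `(-q^(1+c); q^2)_∞` with `w = q^c` -/
noncomputable def La (q w : ℂ) : ℂ := qPochInf (-(q*w)) (q^2)

lemma TT_inner_sum (q : ℂ) (hq : ‖q‖ < 1) (l : ℕ) :
    ∑' y : ℕ × ℕ × ℕ, TT q l y.1 y.2.1 y.2.2
      = (q^(l^2+l) / PP (q^2) l) * (La q (q^l) * (La q (q^l)⁻¹ * La q (q^l)⁻¹)) := by
  obtain ⟨a1, a2⟩ := euler_z q hq (q^l)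
  obtain ⟨b1, b2⟩ := euler_z q hq (q^l)⁻¹
  simp only [TT, La]
  rw [tsum_mul_left, ← a1, ← b1, tsum_mul_tsum_of_summable_norm b2 b2,
    tsum_mul_tsum_of_summable_norm a2 (b2.mul_norm b2)]

lemma La_up (q : ℂ) (hq : ‖q‖ < 1) (w : ℂ) : La q w = (1 + q*w) * La q (w*q^2) := by
  rw [La, qpi_step _ _ (npow_lt q hq 2 (by simp)), La]
  congr 1
  · ring
  · congr 1; ring

lemma La_pos (q : ℂ) (hq : ‖q‖ < 1) (w : ℂ) (m : ℕ) :
    La q w = qPoch (-(q*w)) (q^2) m * La q (w*q^(2*m)) := by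
  induction m with
  | zero => simp [qp_zero]
  | succ m ih =>
    rw [ih, La_up q hq (w*q^(2*m)), qp_succ, show w*q^(2*m)*q^2 = w*q^(2*(m+1)) by ring]
    ring

lemma La_neg_even (q : ℂ) (h0 : q ≠ 0) (hq : ‖q‖ < 1) (m : ℕ) :
    La q (q^(2*m))⁻¹ * q^(m^2) = qPoch (-q) (q^2) m * La q 1 := by
  induction m with
  | zero => simp [qp_zero]
  | succ m ih =>
    have e : (q^(2*(m+1)))⁻¹*q^2 = (q^(2*m))⁻¹ := by
      rw [show 2*(m+1) = 2*m+2 by ring, pow_add]; field_simp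
    rw [La_up q hq, e, qp_succ]
    have e2 : (1 + q*(q^(2*(m+1)))⁻¹) * q^((m+1)^2) = q^(m^2) * (1 - -q*(q^2)^m) := by
      field_simp
      ring
    linear_combination (1 - -q*(q^2)^m) * ih + La q (q^(2*m))⁻¹ * e2

lemma La_neg_odd (q : ℂ) (h0 : q ≠ 0) (hq : ‖q‖ < 1) (m : ℕ) :
    La q (q^(2*m+1))⁻¹ * q^(m^2+m) = 2 * qPoch (-q^2) (q^2) m * La q q := by
  induction m with
  | zero =>
    simp only [qp_zero]
    rw [La_up q hq, show (q^(2*0+1))⁻¹*q^2 = q by simp; field_simp]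
    simp
    rw [mul_inv_cancel₀ h0]; norm_num
  | succ m ih =>
    have e : (q^(2*(m+1)+1))⁻¹*q^2 = (q^(2*m+1))⁻¹ := by
      rw [show 2*(m+1)+1 = 2*m+1+2 by ring, pow_add]; field_simp
    rw [La_up q hq, e, qp_succ]
    have e2 : (1 + q*(q^(2*(m+1)+1))⁻¹) * q^((m+1)^2+(m+1)) = q^(m^2+m) * (1 - -q^2*(q^2)^m) := by
      field_simp
      ring
    linear_combination (1 - -q^2*(q^2)^m) * ih + La q (q^(2*m+1))⁻¹ * e2

lemma qp_neg_ne (q : ℂ) (hq : ‖q‖ < 1) (a : ℕ) (ha : a ≠ 0) (m : ℕ) : qPoch (-q^a) (q^2) m ≠ 0 := by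
  rw [qPoch, Finset.prod_ne_zero_iff]
  intro k _
  apply one_sub_ne
  rw [neg_mul, norm_neg, ← pow_mul, ← pow_add]
  exact npow_lt q hq _ (by omega)

lemma term_even (q : ℂ) (h0 : q ≠ 0) (hq : ‖q‖ < 1) (m : ℕ) :
    (q^((2*m)^2+2*m) / PP (q^2) (2*m)) * (La q (q^(2*m)) * (La q (q^(2*m))⁻¹ * La q (q^(2*m))⁻¹))
    = La q 1 ^ 3 * ((q^2)^(m^2+m) * (qPoch (-q) (q^2) m / PP (q^2) (2*m))) := by
  have a := La_neg_even q h0 hq m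
  have b := La_pos q hq 1 m
  rw [mul_one, one_mul] at b
  have hne := qp_neg_ne q hq 1 (by simp) m
  rw [pow_one] at hne
  generalize qPoch (-q) (q^2) m = Y at *
  have c : La q (q^(2*m)) * Y = La q 1 := by rw [b]; ring
  apply mul_right_cancel₀ hne
  calc _ = (q^2)^(m^2+m) / PP (q^2) (2*m) * (La q (q^(2*m)) * Y) * (La q (q^(2*m))⁻¹ * q^(m^2))^2 := by ring
    _ = _ := by rw [a, c]; ring

lemma term_odd (q : ℂ) (h0 : q ≠ 0) (hq : ‖q‖ < 1) (m : ℕ) :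
    (q^((2*m+1)^2+(2*m+1)) / PP (q^2) (2*m+1)) *
      (La q (q^(2*m+1)) * (La q (q^(2*m+1))⁻¹ * La q (q^(2*m+1))⁻¹))
    = 4 * q^2 * La q q ^ 3 * ((q^2)^(m^2+2*m) * (qPoch (-q^2) (q^2) m / PP (q^2) (2*m+1))) := by
  have a := La_neg_odd q h0 hq m
  have b := La_pos q hq q m
  rw [show q * q^(2*m) = q^(2*m+1) by ring, show q * q = q^2 by ring] at b
  have hne := qp_neg_ne q hq 2 (by simp) m
  generalize qPoch (-q^2) (q^2) m = Y at *
  have c : La q (q^(2*m+1)) * Y = La q q := by rw [b]; ring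
  apply mul_right_cancel₀ hne
  calc _ = q^2 * (q^2)^(m^2+2*m) / PP (q^2) (2*m+1) * (La q (q^(2*m+1)) * Y)
        * (La q (q^(2*m+1))⁻¹ * q^(m^2+m))^2 := by ring
    _ = _ := by rw [a, c]; ring

def rot : ℕ × ℕ × ℕ × ℕ ≃ ℕ × ℕ × ℕ × ℕ where
  toFun x := (x.2.1, x.2.2.1, x.2.2.2, x.1)
  invFun y := (y.2.2.2, y.1, y.2.1, y.2.2.1)
  left_inv _ := rfl
  right_inv _ := rfl

lemma total (q : ℂ) (h0 : q ≠ 0) (hq : ‖q‖ < 1) :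
    ∑' x : ℕ × ℕ × ℕ × ℕ, TT q x.1 x.2.1 x.2.2.1 x.2.2.2
    = (J q 2)^6 * J q 14 * (J q 28)^5 /
        ((J q 1)^3 * (J q 4)^3 * Jam q 4 28 * Jam q 5 28 * Jam q 6 28 *
          Jam q 7 28 * Jam q 8 28 * Jam q 9 28)
      + 4 * q^2 * (J q 4)^3 * Jam q 4 28 / (J q 2)^4 := by
  have hs := TT_summable q h0 hq
  have hs' := hs.prod
  rw [hs.tsum_prod]
  simp only [TT_inner_sum q hq] at hs' ⊢
  obtain ⟨-, -, h3⟩ := even_odd _ hs'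
  rw [h3]
  simp only [term_even q h0 hq, term_odd q h0 hq]
  rw [tsum_mul_left, tsum_mul_left, sumE q hq, sumO (q^2) (npow_lt q hq 2 (by simp))]
  have l1 : La q 1 = J q 2 ^ 2 / (J q 1 * J q 4) := by rw [← prodA q hq, La, mul_one]
  have l2 : La q q = J q 4 / J q 2 := by rw [← prodB q hq, La, show q * q = q^2 by ring]
  have l3 : qPochInf ((q^2)^2) ((q^2)^14) * qPochInf ((q^2)^12) ((q^2)^14)
      * qPochInf ((q^2)^14) ((q^2)^14) = Jam q 4 28 := by
    simp only [Jam, ← pow_mul]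
  have l4 : qPochInf (q^2) (q^2) = J q 2 := rfl
  rw [l1, l2, l3, l4]
  congr 1
  · rw [div_pow, ← pow_mul, mul_pow, div_mul_div_comm]
    congr 1
    · ring
    · ring
  · rw [div_pow]
    simp only [div_eq_mul_inv, ← inv_pow]
    ring

theorem stmt_15 (q : ℂ) (h0 : 0 < ‖q‖) (h1 : ‖q‖ < 1) :
    (∑' p : ℕ × ℕ × ℕ × ℕ,
      (fun (i j k l : ℕ) =>
        q ^ (((i:ℤ)^2 + (j:ℤ)^2 + (k:ℤ)^2 + (l:ℤ)^2 + (i:ℤ)*(l:ℤ) - (j:ℤ)*(l:ℤ) - (k:ℤ)*(l:ℤ) + (l:ℤ)) : ℤ) /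
          (qPoch (q ^ 2) (q ^ 2) i * qPoch (q ^ 2) (q ^ 2) j * qPoch (q ^ 2) (q ^ 2) k * qPoch (q ^ 2) (q ^ 2) l))
        p.1 p.2.1 p.2.2.1 p.2.2.2)
    = (J q 2)^6 * J q 14 * (J q 28)^5 /
        ((J q 1)^3 * (J q 4)^3 * Jam q 4 28 * Jam q 5 28 * Jam q 6 28 *
          Jam q 7 28 * Jam q 8 28 * Jam q 9 28)
      + 4 * q^2 * (J q 4)^3 * Jam q 4 28 / (J q 2)^4 := by
  have hq0 : q ≠ 0 := norm_pos_iff.mp h0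
  rw [← total q hq0 h1, ← rot.tsum_eq]
  refine tsum_congr ?_
  rintro ⟨l, i, j, k⟩
  exact TT_eq q hq0 i j k l
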